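/- The while-loop rule (R.LP) of propositional quantum Hoare logic is derivable: in every non-idempotent Kleene algebra with an effect subalgebra L with top element e, for every two-element partition (m_0, m_1), all a, b ∈ L, and every p ∈ K, if p·¬(m_0·a + m_1·b) ≤ ¬b, then (m_1·p)*·m_0·¬a ≤ ¬(m_0·a + m_1·b). -/

import Mathlib

/-!
The negation in an effect subalgebra is linear along a partition:
`¬(m₀ a + m₁ b) = m₀ ¬a + m₁ ¬b`, since both sides complement `m₀ a + m₁ b` to
`m₀ e + m₁ e = e` (`neg_partition`). Writing `r` for this element, the premise
`p r ≤ ¬b` gives `m₀ ¬a + (m₁ p) r ≤ m₀ ¬a + m₁ ¬b = r`, and left star induction yields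
`(m₁ p)⋆ (m₀ ¬a) ≤ r`.
-/

/-- A non-idempotent Kleene algebra (NKA): a (not necessarily additively
idempotent) semiring equipped with a partial order preserved by `+` and `*`,
and a star operation satisfying `1 + p * p⋆ ≤ p⋆` and the two induction laws. -/
class NKA (K : Type*) extends Semiring K, PartialOrder K where
  star : K → K
  add_le_add' : ∀ {p q r s : K}, p ≤ q → r ≤ s → p + r ≤ q + s
  mul_le_mul' : ∀ {p q r s : K}, p ≤ q → r ≤ s → p * r ≤ q * s
  one_add_mul_star_le : ∀ p : K, 1 + p * star p ≤ star p
  star_ind_left : ∀ {p q r : K}, q + p * r ≤ r → star p * q ≤ r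
  star_ind_right : ∀ {p q r : K}, q + r * p ≤ r → q * star p ≤ r

postfix:max "⋆" => NKA.star

/-- An effect subalgebra of an NKA `K`: a subset `carrier` with top element
`e ∈ carrier`, containing `0`, bounded above by `e`, closed under sums that
stay below `e`, and equipped with a negation: for every `a ∈ carrier`,
`neg a` is the unique element of `carrier` with `a + neg a = e`. -/
structure EffectSubalgebra (K : Type*) [NKA K] where
  carrier : Set K
  e : K
  e_mem : e ∈ carrier
  zero_mem : (0 : K) ∈ carrier
  le_e : ∀ a ∈ carrier, a ≤ e
  add_mem : ∀ {a b : K}, a ∈ carrier → b ∈ carrier → a + b ≤ e → a + b ∈ carrier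
  neg : K → K
  neg_mem : ∀ {a : K}, a ∈ carrier → neg a ∈ carrier
  add_neg : ∀ {a : K}, a ∈ carrier → a + neg a = e
  neg_unique : ∀ {a b : K}, a ∈ carrier → b ∈ carrier → a + b = e → b = neg a

theorem partition_mem {K : Type*} [NKA K] (L : EffectSubalgebra K) {m₀ m₁ : K}
    (hm₀ : ∀ a ∈ L.carrier, m₀ * a ∈ L.carrier)
    (hm₁ : ∀ a ∈ L.carrier, m₁ * a ∈ L.carrier)
    (hpart : m₀ * L.e + m₁ * L.e = L.e)
    {a b : K} (ha : a ∈ L.carrier) (hb : b ∈ L.carrier) :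
    m₀ * a + m₁ * b ∈ L.carrier := by
  refine L.add_mem (hm₀ a ha) (hm₁ b hb) ?_
  calc m₀ * a + m₁ * b ≤ m₀ * L.e + m₁ * L.e :=
        NKA.add_le_add' (NKA.mul_le_mul' le_rfl (L.le_e a ha))
          (NKA.mul_le_mul' le_rfl (L.le_e b hb))
    _ = L.e := hpart

theorem neg_partition {K : Type*} [NKA K] (L : EffectSubalgebra K) {m₀ m₁ : K}
    (hm₀ : ∀ a ∈ L.carrier, m₀ * a ∈ L.carrier)
    (hm₁ : ∀ a ∈ L.carrier, m₁ * a ∈ L.carrier)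
    (hpart : m₀ * L.e + m₁ * L.e = L.e)
    {a b : K} (ha : a ∈ L.carrier) (hb : b ∈ L.carrier) :
    L.neg (m₀ * a + m₁ * b) = m₀ * L.neg a + m₁ * L.neg b := by
  refine (L.neg_unique (partition_mem L hm₀ hm₁ hpart ha hb)
    (partition_mem L hm₀ hm₁ hpart (L.neg_mem ha) (L.neg_mem hb)) ?_).symm
  rw [add_add_add_comm, ← mul_add, ← mul_add, L.add_neg ha, L.add_neg hb, hpart]

/-- The while-loop rule (R.LP) of propositional quantum Hoare logic is
derivable in NKAT: for a two-element partition `(m₀, m₁)`, if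
`p * ¬(m₀ * a + m₁ * b) ≤ ¬b` then
`(m₁ * p)⋆ * m₀ * ¬a ≤ ¬(m₀ * a + m₁ * b)`. -/
theorem nkat_rule_loop {K : Type*} [NKA K] (L : EffectSubalgebra K)
    (m₀ m₁ : K)
    (hm₀ : ∀ a ∈ L.carrier, m₀ * a ∈ L.carrier)
    (hm₁ : ∀ a ∈ L.carrier, m₁ * a ∈ L.carrier)
    (hpart : m₀ * L.e + m₁ * L.e = L.e)
    (a b : K) (ha : a ∈ L.carrier) (hb : b ∈ L.carrier)
    (p : K) (h : p * L.neg (m₀ * a + m₁ * b) ≤ L.neg b) :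
    (m₁ * p)⋆ * m₀ * L.neg a ≤ L.neg (m₀ * a + m₁ * b) := by
  rw [neg_partition L hm₀ hm₁ hpart ha hb] at h ⊢
  rw [mul_assoc]
  apply NKA.star_ind_left
  rw [mul_assoc]
  exact NKA.add_le_add' le_rfl (NKA.mul_le_mul' le_rfl h)
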